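/- arXiv:2208.05655 — 2 statements merged into one kernel-verified Lean document; each statement's English description precedes it below -/
import Mathlib

section
/- Every 𝔄-retraction τ: A → 𝔄 is completely positive; in particular, for all a₁,…,aₙ ∈ A and α₁,…,αₙ ∈ 𝔄 one has Σᵢ,ⱼ αᵢ* τ(aᵢ* aⱼ) αⱼ ≥ 0 in 𝔄. -/
open Filter Topology

noncomputable section

/-- A positive element of a `*`-ring: one of the form `star b * b`. -/
def IsPosElem {R : Type} [Mul R] [Star R] (x : R) : Prop := ∃ b : R, x = star b * b

/-- Positivity for an `n × n` matrix over a `*`-ring, phrased entrywise: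
`M = star b * b` for some rectangular matrix `b`. -/
def MatPos {R : Type} [AddCommMonoid R] [Mul R] [Star R] {n : ℕ}
    (M : Fin n → Fin n → R) : Prop :=
  ∃ (m : ℕ) (b : Fin m → Fin n → R), ∀ i j, M i j = ∑ k, star (b k i) * b k j

/-- A map between `*`-rings is completely positive if all its amplifications map
positive matrices to positive matrices. -/
def IsCPMap {R Z : Type} [AddCommMonoid R] [Mul R] [Star R]
    [AddCommMonoid Z] [Mul Z] [Star Z] (φ : R → Z) : Prop :=
  ∀ (n : ℕ) (M : Fin n → Fin n → R), MatPos M → MatPos (fun i j => φ (M i j))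

variable (𝔄 A : Type) [NonUnitalCStarAlgebra 𝔄] [NonUnitalCStarAlgebra A]

/-- A compatible right Banach `𝔄`-module structure on the C*-algebra `A`,
making `A` an `𝔄`-C*-module. -/
structure CStarAction where
  act : A → 𝔄 → A
  act_add : ∀ (a : A) (α β : 𝔄), act a (α + β) = act a α + act a β
  add_act : ∀ (a b : A) (α : 𝔄), act (a + b) α = act a α + act b α
  act_smulC : ∀ (c : ℂ) (a : A) (α : 𝔄), act a (c • α) = c • act a α
  smulC_act : ∀ (c : ℂ) (a : A) (α : 𝔄), act (c • a) α = c • act a α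
  norm_act : ∀ (a : A) (α : 𝔄), ‖act a α‖ ≤ ‖a‖ * ‖α‖
  mul_act : ∀ (a b : A) (α : 𝔄), act (a * b) α = a * act b α
  act_mul : ∀ (a : A) (α β : 𝔄), act a (α * β) = act (act a α) β
  star_compat : ∀ (a : A) (α β : 𝔄),
    act (star (act (star a) (star α))) β = star (act (star (act a β)) (star α))

variable {𝔄 A}

/-- The associated left action `α • a := (a* • α*)*`. -/
def CStarAction.lact (S : CStarAction 𝔄 A) (α : 𝔄) (a : A) : A :=
  star (S.act (star a) (star α))

/-- The action is non degenerate if `a • α = 0` for all `a` forces `α = 0`. -/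
def CStarAction.NonDegenerate (S : CStarAction 𝔄 A) : Prop :=
  ∀ α : 𝔄, (∀ a : A, S.act a α = 0) → α = 0

/-- The two-sided action is a biaction: `(a • α) b = a (α • b)`. -/
def CStarAction.Biaction (S : CStarAction 𝔄 A) : Prop :=
  ∀ (a : A) (α : 𝔄) (b : A), S.act a α * b = a * S.lact α b

/-- An `𝔄`-retraction: a positive right `𝔄`-module map `τ : A → 𝔄` with strictly dense
image such that `τ` sends some bounded approximate identity of `A` strictly to a
projection `p` of `𝔄`.  (Nets are encoded by filters.) -/
structure IsRetraction (S : CStarAction 𝔄 A) (τ : A → 𝔄) : Prop where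
  map_add : ∀ a b : A, τ (a + b) = τ a + τ b
  map_smulC : ∀ (c : ℂ) (a : A), τ (c • a) = c • τ a
  pos : ∀ a : A, IsPosElem (τ (star a * a))
  map_act : ∀ (a : A) (α : 𝔄), τ (S.act a α) = τ a * α
  strict_dense : ∀ (β : 𝔄) (ε : ℝ), 0 < ε → ∀ s : Finset 𝔄,
    ∃ a : A, ∀ α ∈ s, ‖τ (S.act a α) - β * α‖ < ε
  bai : ∃ (l : Filter A) (p : 𝔄), l.NeBot ∧ (∃ C : ℝ, ∀ᶠ e in l, ‖e‖ ≤ C) ∧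
    (∀ a : A, Tendsto (fun e => e * a) l (𝓝 a)) ∧
    (∀ a : A, Tendsto (fun e => a * e) l (𝓝 a)) ∧
    star p = p ∧ p * p = p ∧
    (∀ α : 𝔄, Tendsto (fun e => τ e * α) l (𝓝 (p * α))) ∧
    (∀ α : 𝔄, Tendsto (fun e => α * τ e) l (𝓝 (α * p)))

/-- An `𝔄`-trace: a tracial `𝔄`-retraction. -/
structure IsATrace (S : CStarAction 𝔄 A) (τ : A → 𝔄) extends IsRetraction S τ : Prop where
  tracial : ∀ a b : A, τ (a * b) = τ (b * a)

/-- A self-adjoint element `a` of a C*-algebra is positive as soon as `w = 0` is the only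
element satisfying `b * a * b = -(star w * w)` for some self-adjoint `b`. -/
theorem IsSelfAdjoint.isPosElem_of_compression {B : Type} [NonUnitalCStarAlgebra B] {a : B}
    (ha : IsSelfAdjoint a)
    (h : ∀ b w : B, IsSelfAdjoint b → b * a * b = -(star w * w) → w = 0) : IsPosElem a := by
  let _ := CStarAlgebra.spectralOrder B
  let _ := CStarAlgebra.spectralOrderedRing B
  have hneg : IsSelfAdjoint a⁻ := .of_nonneg (CFC.negPart_nonneg a)
  obtain ⟨s, hs⟩ := CStarAlgebra.nonneg_iff_eq_star_mul_self.mp (CFC.negPart_nonneg a)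
  have hcube : star (s * a⁻) * (s * a⁻) = a⁻ * a⁻ * a⁻ := by
    rw [star_mul, hneg.star_eq, mul_assoc, ← mul_assoc (star s), ← hs, mul_assoc]
  have hmul : a⁻ * a = -(a⁻ * a⁻) := by
    calc a⁻ * a = a⁻ * (a⁺ - a⁻) := by rw [CFC.posPart_sub_negPart a ha]
      _ = -(a⁻ * a⁻) := by rw [mul_sub, CFC.negPart_mul_posPart, zero_sub]
  have hw : s * a⁻ = 0 := h _ _ hneg (by rw [hcube, hmul, neg_mul])
  have hsq : a⁻ * a⁻ = 0 := by rw [hs, mul_assoc, ← hs, hw, mul_zero]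
  have hzero : a⁻ = 0 := by
    rw [← CStarRing.star_mul_self_eq_zero_iff, hneg.star_eq, hsq]
  exact CStarAlgebra.nonneg_iff_eq_star_mul_self.mp ((CFC.negPart_eq_zero_iff a ha).mp hzero)

/-- A self-adjoint matrix over a C*-algebra whose quadratic form is nonnegative on all
columns is positive. -/
theorem CStarMatrix.isPosElem_of_quadratic_form_nonneg {ι B : Type} [Fintype ι]
    [NonUnitalCStarAlgebra B] [PartialOrder B] [StarOrderedRing B]
    (T : CStarMatrix ι ι B) (hT : IsSelfAdjoint T)
    (h : ∀ x : ι → B, 0 ≤ ∑ i, ∑ j, star (x i) * T i j * x j) : IsPosElem T := by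
  refine hT.isPosElem_of_compression fun N W hN hW => ?_
  ext l k
  have hentry : (N * T * N) k k = ∑ i, ∑ j, star (N i k) * T i j * N j k := by
    simp only [CStarMatrix.mul_apply, Finset.sum_mul, CStarMatrix.star_apply_of_isSelfAdjoint hN]
    exact Finset.sum_comm
  have hsum : ∑ i, star (W i k) * W i k ≤ 0 := by
    have hnonneg := h (fun i => N i k)
    rw [← hentry, hW, CStarMatrix.neg_apply, CStarMatrix.mul_apply] at hnonneg
    simpa only [CStarMatrix.star_apply, Left.nonneg_neg_iff] using hnonneg
  have hle : star (W l k) * W l k ≤ 0 :=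
    (Finset.single_le_sum (f := fun i => star (W i k) * W i k)
      (fun i _ => star_mul_self_nonneg _) (Finset.mem_univ l)).trans hsum
  exact (CStarRing.star_mul_self_eq_zero_iff _).mp (hle.antisymm (star_mul_self_nonneg _))

/-- An `𝔄`-retraction bundled as a linear map. -/
def IsRetraction.toLinearMap {S : CStarAction 𝔄 A} {τ : A → 𝔄} (hτ : IsRetraction S τ) :
    A →ₗ[ℂ] 𝔄 where
  toFun := τ
  map_add' := hτ.map_add
  map_smul' := hτ.map_smulC

theorem IsRetraction.map_sum {S : CStarAction 𝔄 A} {τ : A → 𝔄} (hτ : IsRetraction S τ)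
    {ι : Type} (s : Finset ι) (f : ι → A) : τ (∑ i ∈ s, f i) = ∑ i ∈ s, τ (f i) :=
  _root_.map_sum hτ.toLinearMap f s

theorem IsRetraction.map_star {S : CStarAction 𝔄 A} {τ : A → 𝔄} (hτ : IsRetraction S τ)
    (a : A) : τ (star a) = star (τ a) := by
  let _ := CStarAlgebra.spectralOrder A
  let _ := CStarAlgebra.spectralOrderedRing A
  have ha : a ∈ Submodule.span ℂ {a : A | 0 ≤ a} := by simp [CStarAlgebra.span_nonneg]
  induction ha using Submodule.span_induction with
  | mem x hx =>
    obtain ⟨b, rfl⟩ := CStarAlgebra.nonneg_iff_eq_star_mul_self.mp (show 0 ≤ x from hx)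
    obtain ⟨c, hc⟩ := hτ.pos b
    rw [star_mul, star_star, hc, star_mul, star_star]
  | zero =>
    have hzero : τ 0 = 0 := _root_.map_zero hτ.toLinearMap
    rw [star_zero, hzero, star_zero]
  | add x y _ _ hx hy => rw [star_add, hτ.map_add, hx, hy, hτ.map_add, star_add]
  | smul c x _ hx => rw [star_smul, hτ.map_smulC, hx, hτ.map_smulC, star_smul]

theorem IsRetraction.map_star_act_mul_act {S : CStarAction 𝔄 A} {τ : A → 𝔄}
    (hτ : IsRetraction S τ) (a b : A) (α β : 𝔄) :
    τ (star (S.act a α) * S.act b β) = star α * τ (star a * b) * β := by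
  rw [← S.mul_act, hτ.map_act, ← star_star (star (S.act a α) * b), hτ.map_star, star_mul,
    star_star, ← S.mul_act, hτ.map_act, star_mul, ← hτ.map_star, star_mul, star_star]

theorem IsRetraction.isPosElem_sum {S : CStarAction 𝔄 A} {τ : A → 𝔄} (hτ : IsRetraction S τ)
    {n : ℕ} (a : Fin n → A) (α : Fin n → 𝔄) :
    IsPosElem (∑ i, ∑ j, star (α i) * τ (star (a i) * a j) * α j) := by
  have := hτ.pos (∑ i, S.act (a i) (α i))
  simpa only [star_sum, Finset.sum_mul_sum, hτ.map_sum, hτ.map_star_act_mul_act] using this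

theorem IsRetraction.isCPMap {S : CStarAction 𝔄 A} {τ : A → 𝔄} (hτ : IsRetraction S τ) :
    IsCPMap τ := by
  let _ := CStarAlgebra.spectralOrder 𝔄
  let _ := CStarAlgebra.spectralOrderedRing 𝔄
  rintro n M ⟨m, b, hM⟩
  let T : CStarMatrix (Fin n) (Fin n) 𝔄 := CStarMatrix.ofMatrix fun i j => τ (M i j)
  have hT : IsSelfAdjoint T := by
    ext i j
    rw [CStarMatrix.star_apply]
    change star (τ (M j i)) = τ (M i j)
    simp only [← hτ.map_star, hM, star_sum, star_mul, star_star]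
  have hpos : IsPosElem T := by
    refine T.isPosElem_of_quadratic_form_nonneg hT fun x => ?_
    have hsum : ∑ i, ∑ j, star (x i) * T i j * x j
        = ∑ k, ∑ i, ∑ j, star (x i) * τ (star (b k i) * b k j) * x j := by
      change ∑ i, ∑ j, star (x i) * τ (M i j) * x j = _
      simp only [hM, hτ.map_sum, Finset.mul_sum, Finset.sum_mul]
      exact (Finset.sum_congr rfl fun i _ => Finset.sum_comm).trans Finset.sum_comm
    rw [hsum]
    refine Finset.sum_nonneg fun k _ => ?_
    obtain ⟨c, hc⟩ := hτ.isPosElem_sum (b k) x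
    rw [hc]
    exact star_mul_self_nonneg c
  obtain ⟨c, hc⟩ := hpos
  refine ⟨n, c, fun i j => ?_⟩
  change T i j = _
  rw [hc, CStarMatrix.mul_apply]
  simp only [CStarMatrix.star_apply]

/-- Every `𝔄`-retraction `τ : A → 𝔄` is completely positive; in particular,
for all `a₁, …, aₙ ∈ A` and `α₁, …, αₙ ∈ 𝔄` one has
`∑ᵢⱼ αᵢ* τ(aᵢ* aⱼ) αⱼ ≥ 0` in `𝔄`. -/
theorem retraction_completely_positive
    {𝔄 A : Type} [NonUnitalCStarAlgebra 𝔄] [NonUnitalCStarAlgebra A]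
    (S : CStarAction 𝔄 A) (τ : A → 𝔄) (hτ : IsRetraction S τ) :
    IsCPMap τ ∧
      ∀ (n : ℕ) (a : Fin n → A) (α : Fin n → 𝔄),
        IsPosElem (∑ i, ∑ j, star (α i) * τ (star (a i) * a j) * α j) :=
  ⟨hτ.isCPMap, fun _ a α => hτ.isPosElem_sum a α⟩
end
end

section
/- If the action of 𝔄 on A is non degenerate, then the 𝔄-retractions are exactly those linear maps τ: A → 𝔄 which extend to an idempotent contractive completely positive map τ̃: M(A) → 𝔄 that is strictly continuous on the unit ball of M(A). -/
open Filter Topology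

noncomputable section

variable (𝔄 A : Type) [NonUnitalCStarAlgebra 𝔄] [NonUnitalCStarAlgebra A]

variable {𝔄 A}

open MultiplierAlgebra

variable {𝔄 A : Type} [NonUnitalCStarAlgebra 𝔄] [NonUnitalCStarAlgebra A]

/-- Right multiplication by `α ∈ 𝔄` as a continuous linear map on `A`. -/
def CStarAction.actCLM (S : CStarAction 𝔄 A) (α : 𝔄) : A →L[ℂ] A :=
  LinearMap.mkContinuous
    { toFun := fun a => S.act a α
      map_add' := fun a b => S.add_act a b α
      map_smul' := fun c a => S.smulC_act c a α }
    ‖α‖ (fun a => by simpa [mul_comm] using S.norm_act a α)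

/-- Left multiplication by `α ∈ 𝔄` as a continuous linear map on `A`. -/
def CStarAction.lactCLM (S : CStarAction 𝔄 A) (α : 𝔄) : A →L[ℂ] A :=
  LinearMap.mkContinuous
    { toFun := fun a => S.lact α a
      map_add' := fun a b => by simp [CStarAction.lact, star_add, S.add_act]
      map_smul' := fun c a => by
        simp [CStarAction.lact, star_smul, S.smulC_act, star_smul]
      }
    ‖α‖ (fun a => by
      have := S.norm_act (star a) (star α)
      simpa [CStarAction.lact, mul_comm] using this)

/-- The canonical map `𝔄 → M(A)` sending `α` to the double centralizer `(Lα, Rα)`. -/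
def CStarAction.iotaM (S : CStarAction 𝔄 A) (hbi : S.Biaction) (α : 𝔄) : 𝓜(ℂ, A) :=
  { fst := S.lactCLM α
    snd := S.actCLM α
    central := fun x y => (hbi x α y) }

section CStarOrder

variable {B : Type*} [NonUnitalCStarAlgebra B] [PartialOrder B] [StarOrderedRing B]

lemma mul_self_le_self_of_norm_le_one {x : B} (hx : 0 ≤ x) (hx1 : ‖x‖ ≤ 1) : x * x ≤ x := by
  obtain ⟨s, hs, rfl⟩ : ∃ s : B, star s = s ∧ s * s = x :=
    ⟨CFC.sqrt x, (CFC.sqrt_nonneg x).star_eq, CFC.sqrt_mul_sqrt_self x⟩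
  have h := CStarAlgebra.star_left_conjugate_le_norm_smul (a := s) (b := s * s) hx.isSelfAdjoint
  rw [hs] at h
  have h2 : ‖s * s‖ • (s * s) ≤ (1 : ℝ) • (s * s) := smul_le_smul_of_nonneg_right hx1 hx
  rw [one_smul] at h2
  simpa only [mul_assoc] using h.trans h2

lemma star_mul_add_star_mul_le (y z : B) {t : ℝ} (ht : 0 < t) :
    star y * z + star z * y ≤ t • (star y * y) + t⁻¹ • (star z * z) := by
  obtain ⟨s, hs, rfl⟩ : ∃ s : ℝ, 0 < s ∧ s * s = t :=
    ⟨√t, Real.sqrt_pos.2 ht, Real.mul_self_sqrt ht.le⟩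
  have h := star_mul_self_nonneg (s • y - s⁻¹ • z)
  rw [← sub_nonneg]
  convert h using 1
  simp only [star_sub, star_smul, star_trivial, sub_mul, mul_sub, smul_mul_smul_comm,
    mul_inv_cancel₀ hs.ne', inv_mul_cancel₀ hs.ne', one_smul, mul_inv]
  abel

lemma nonneg_of_forall_positive_functional {x : B}
    (h : ∀ f : B →L[ℝ] ℝ, (∀ y, 0 ≤ y → 0 ≤ f y) → 0 ≤ f x) : 0 ≤ x := by
  by_contra hx
  obtain ⟨f, s, hfx, hf⟩ := geometric_hahn_banach_point_closed (x := x) (t := {y : B | 0 ≤ y})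
    (convex_Ici (𝕜 := ℝ) (0 : B)) CStarAlgebra.isClosed_nonneg hx
  have hs : s < 0 := by simpa using hf 0 le_rfl
  refine absurd (h f fun y hy => ?_) (by linarith)
  by_contra! hy'
  have := hf ((s / f y) • y) (smul_nonneg (div_nonneg_of_nonpos hs.le hy'.le) hy)
  rw [map_smul, smul_eq_mul, div_mul_cancel₀ _ hy'.ne] at this
  exact lt_irrefl _ this

lemma le_of_forall_positive_functional {x y : B}
    (h : ∀ f : B →L[ℝ] ℝ, (∀ y, 0 ≤ y → 0 ≤ f y) → f x ≤ f y) : x ≤ y :=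
  sub_nonneg.1 <| nonneg_of_forall_positive_functional fun f hf => by
    simpa using h f hf

lemma apply_le_of_norm_le_one {g : B →L[ℝ] ℝ} {K : ℝ}
    (hK : ∀ x : B, 0 ≤ x → ‖x‖ < 1 → g x ≤ K) {x : B} (hx : 0 ≤ x) (hx1 : ‖x‖ ≤ 1) :
    g x ≤ K := by
  have hlim : Tendsto (fun r : ℝ => g (r • x)) (𝓝[<] 1) (𝓝 (g ((1 : ℝ) • x))) := by
    have : Continuous fun r : ℝ => g (r • x) := by fun_prop
    exact (this.tendsto 1).mono_left nhdsWithin_le_nhds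
  rw [one_smul] at hlim
  refine le_of_tendsto hlim ?_
  filter_upwards [Ioo_mem_nhdsLT (zero_lt_one' ℝ)] with r hr
  refine hK _ (smul_nonneg hr.1.le hx) ?_
  rw [norm_smul, Real.norm_of_nonneg hr.1.le]
  nlinarith [hr.1, hr.2, norm_nonneg x]

/-- A positive functional attains its supremum over the positive unit ball in the limit along
any bounded approximate identity. -/
lemma isLUB_of_tendsto_boundedApproximateIdentity {g : B →L[ℝ] ℝ} (hg : ∀ x, 0 ≤ x → 0 ≤ g x)
    {l : Filter B} [l.NeBot] {C : ℝ} (hC : ∀ᶠ e in l, ‖e‖ ≤ C)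
    (hl : ∀ a : B, Tendsto (fun e => e * a) l (𝓝 a)) {L : ℝ}
    (hL : Tendsto (fun e => g (e + star e)) l (𝓝 (2 * L))) :
    IsLUB (g '' {x | 0 ≤ x ∧ ‖x‖ < 1}) L := by
  set D := g '' {x : B | 0 ≤ x ∧ ‖x‖ < 1} with hD
  have hmono {x y : B} (h : x ≤ y) : g x ≤ g y := by
    simpa using hg _ (sub_nonneg.2 h)
  have hne : D.Nonempty := ⟨g 0, 0, by simp, rfl⟩
  have hbdd : BddAbove D := by
    refine ⟨‖g‖, ?_⟩
    rintro _ ⟨x, hx, rfl⟩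
    exact (le_abs_self _).trans ((g.le_opNorm x).trans (by nlinarith [norm_nonneg g, hx.2]))
  have hK := isLUB_csSup hne hbdd
  set K := sSup D
  have hKle {x : B} (hx : 0 ≤ x) (hx1 : ‖x‖ ≤ 1) : g x ≤ K :=
    apply_le_of_norm_le_one (fun x hx hx1 => hK.1 ⟨x, ⟨hx, hx1⟩, rfl⟩) hx hx1
  have hC0 : 0 ≤ C := by
    obtain ⟨e, he⟩ := hC.exists
    exact (norm_nonneg e).trans he
  set M := ‖g‖ * (C * C)
  have hM : 0 ≤ M := by positivity
  have htail {e : B} (he : ‖e‖ ≤ C) {u : B} (hu : 0 ≤ u) (hu1 : ‖u‖ < 1) {t : ℝ} (ht : 0 < t) :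
      |g (e + star e) - g (e * u + u * star e)| ≤ t * (K - g u) + t⁻¹ * M := by
    have hA := CStarAlgebra.increasingApproximateUnit B
    have hlim : Tendsto (fun v => |g (e * v + v * star e) - g (e * u + u * star e)|)
        (CStarAlgebra.approximateUnit B)
        (𝓝 |g (e + star e) - g (e * u + u * star e)|) := by
      have := (hA.tendsto_mul_left e).add (hA.tendsto_mul_right (star e))
      exact (((g.continuous.tendsto _).comp this).sub_const _).abs
    refine le_of_tendsto hlim ?_
    filter_upwards [(CStarAlgebra.hasBasis_approximateUnit B).mem_of_mem ⟨hu, hu1⟩] with v hv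
    obtain ⟨huv : u ≤ v, hv1⟩ := hv
    replace hv1 : ‖v‖ ≤ 1 := by simpa using hv1
    have hw : 0 ≤ v - u := sub_nonneg.2 huv
    have hw1 : ‖v - u‖ ≤ 1 :=
      (CStarAlgebra.norm_le_norm_of_nonneg_of_le hw (sub_le_self v hu)).trans hv1
    have hee : g (e * star e) ≤ M := by
      refine (le_abs_self _).trans ((g.le_opNorm _).trans ?_)
      rw [CStarRing.norm_self_mul_star]
      exact mul_le_mul_of_nonneg_left
        (mul_le_mul he he (norm_nonneg e) hC0) (norm_nonneg g)
    have hww : g ((v - u) * (v - u)) ≤ K - g u := by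
      have h1 := hmono (mul_self_le_self_of_norm_le_one hw hw1)
      have h2 := hKle (hu.trans huv) hv1
      rw [map_sub] at h1
      linarith
    have hbound : t * g ((v - u) * (v - u)) + t⁻¹ * g (e * star e) ≤ t * (K - g u) + t⁻¹ * M := by
      gcongr
    have h1 := hmono (star_mul_add_star_mul_le (v - u) (star e) ht)
    have h2 := hmono (star_mul_add_star_mul_le (v - u) (-star e) ht)
    simp only [hw.star_eq, star_star, star_neg, map_add, map_smul, smul_eq_mul, neg_mul,
      mul_neg, map_neg] at h1 h2
    have h3 : g (e * v + v * star e) - g (e * u + u * star e) =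
        g ((v - u) * star e) + g (e * (v - u)) := by
      simp only [mul_sub, sub_mul, map_add, map_sub]
      ring
    rw [h3, abs_le]
    constructor <;> linarith
  have hdist {u : B} (hu : 0 ≤ u) (hu1 : ‖u‖ < 1) {t : ℝ} (ht : 0 < t) :
      |2 * L - 2 * g u| ≤ t * (K - g u) + t⁻¹ * M := by
    have h1 : Tendsto (fun e => e * u + u * star e) l (𝓝 (u + u)) := by
      have h := (hl u).add ((hl u).star)
      simpa [hu.star_eq] using h
    have h2 : Tendsto (fun e => |g (e + star e) - g (e * u + u * star e)|) l
        (𝓝 |2 * L - g (u + u)|) :=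
      (hL.sub ((g.continuous.tendsto _).comp h1)).abs
    rw [map_add, ← two_mul] at h2
    exact le_of_tendsto h2 (hC.mono fun e he => htail he hu hu1 ht)
  suffices L = K from this ▸ hK
  suffices ∀ ε > 0, |L - K| ≤ ε from
    sub_eq_zero.1 (abs_nonpos_iff.1 (le_of_forall_pos_le_add fun ε hε => by simpa using this ε hε))
  intro ε hε
  set t := M / ε + 1
  have ht : 0 < t := by positivity
  have htM : t⁻¹ * M ≤ ε := by
    rw [inv_mul_le_iff₀ ht]
    simp only [t]
    field_simp
    linarith
  obtain ⟨_, ⟨u, ⟨hu, hu1⟩, rfl⟩, hlt⟩ :=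
    exists_lt_of_lt_csSup hne (show K - ε / (t + 2) < K by simpa using by positivity)
  have h1 := hdist hu hu1 ht
  have h2 := hKle hu hu1.le
  have h3 : (t + 2) * (K - g u) ≤ ε := by
    have : K - g u ≤ ε / (t + 2) := by linarith
    calc (t + 2) * (K - g u) ≤ (t + 2) * (ε / (t + 2)) := by gcongr
      _ = ε := by field_simp
  rw [abs_le] at h1 ⊢
  constructor <;> nlinarith

end CStarOrder

section MatrixPositivity

/-- Compressing a selfadjoint element by its negative part gives a negative element, which
vanishes only if the original element is positive. -/
lemma exists_compression_eq_neg_star_mul_self {D : Type*} [NonUnitalCStarAlgebra D]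
    [PartialOrder D] [StarOrderedRing D] {T : D} (hT : IsSelfAdjoint T) :
    ∃ N Y : D, star N = N ∧ N * T * N = -(star Y * Y) ∧ (Y = 0 → ∃ b, T = star b * b) := by
  have hN : 0 ≤ T⁻ := CFC.negPart_nonneg T
  obtain ⟨Y, hY⟩ : ∃ Y, T⁻ * T⁻ * T⁻ = star Y * Y := by
    refine CStarAlgebra.nonneg_iff_eq_star_mul_self.1 ?_
    have := star_left_conjugate_nonneg hN (T⁻)
    rwa [hN.star_eq] at this
  refine ⟨T⁻, Y, hN.star_eq, ?_, fun hY0 => ?_⟩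
  · nth_rw 2 [← CFC.posPart_sub_negPart T hT]
    rw [mul_sub, CFC.negPart_mul_posPart, zero_sub, neg_mul, hY]
  · refine CStarAlgebra.nonneg_iff_eq_star_mul_self.1 ((CFC.negPart_eq_zero_iff T hT).1 ?_)
    have h3 : T⁻ * T⁻ * T⁻ = 0 := by rw [hY, hY0, mul_zero]
    have h2 : T⁻ * T⁻ = 0 := by
      rw [← CStarRing.star_mul_self_eq_zero_iff, star_mul, hN.star_eq, ← mul_assoc, h3, zero_mul]
    rwa [← CStarRing.star_mul_self_eq_zero_iff, hN.star_eq]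

variable {B : Type} [NonUnitalCStarAlgebra B] [PartialOrder B] [StarOrderedRing B]

lemma isPosElem_iff_nonneg {x : B} : IsPosElem x ↔ 0 ≤ x :=
  CStarAlgebra.nonneg_iff_eq_star_mul_self.symm

lemma eq_zero_of_sum_star_mul_self_eq_zero {n : ℕ} {y : Fin n → B}
    (h : ∑ k, star (y k) * y k = 0) (k : Fin n) : y k = 0 := by
  have := (Finset.sum_eq_zero_iff_of_nonneg fun k _ => star_mul_self_nonneg (y k)).1 h k
    (Finset.mem_univ k)
  exact (CStarRing.star_mul_self_eq_zero_iff _).1 this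

/-- A hermitian matrix over a C*-algebra whose associated quadratic form is positive is a
positive matrix. -/
lemma matPos_of_forall_sum_nonneg {n : ℕ} (M : Fin n → Fin n → B)
    (hstar : ∀ i j, star (M i j) = M j i)
    (hM : ∀ α : Fin n → B, 0 ≤ ∑ i, ∑ j, star (α i) * M i j * α j) : MatPos M := by
  let T : CStarMatrix (Fin n) (Fin n) B := CStarMatrix.ofMatrix (Matrix.of M)
  have hT : IsSelfAdjoint T := by
    ext i j
    exact hstar j i
  obtain ⟨N, Y, hN, hNTN, hY⟩ := exists_compression_eq_neg_star_mul_self hT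
  have hY0 : Y = 0 := by
    ext k j
    refine eq_zero_of_sum_star_mul_self_eq_zero (y := fun k => Y k j) ?_ k
    refine le_antisymm ?_ (Finset.sum_nonneg fun k _ => star_mul_self_nonneg _)
    have h1 := hM fun i => N i j
    have hstarN (i : Fin n) : star (N i j) = N j i := congr_fun (congr_fun hN j) i
    have h2 : ∑ i, ∑ k, star (N i j) * M i k * N k j = (N * T * N) j j := by
      simp only [CStarMatrix.mul_apply, Finset.sum_mul, hstarN]
      exact Finset.sum_comm
    rw [h2, hNTN] at h1
    have h3 : (-(star Y * Y)) j j = -∑ k, star (Y k j) * Y k j := by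
      simp [CStarMatrix.mul_apply, CStarMatrix.star_apply]
    rw [h3] at h1
    exact neg_nonneg.1 h1
  obtain ⟨b, hb⟩ := hY hY0
  refine ⟨n, fun k i => b k i, fun i j => ?_⟩
  have := congr_fun (congr_fun hb i) j
  rw [CStarMatrix.mul_apply] at this
  exact this

end MatrixPositivity

section Multiplier

lemma eq_of_forall_mul_left_eq {x y : A} (h : ∀ c : A, c * x = c * y) : x = y := by
  rw [← sub_eq_zero, ← CStarRing.star_mul_self_eq_zero_iff, mul_sub, h, sub_self]

namespace DoubleCentralizer

lemma fst_mul (m : 𝓜(ℂ, A)) (a b : A) : m.fst (a * b) = m.fst a * b :=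
  eq_of_forall_mul_left_eq fun c => by rw [← m.central, ← mul_assoc, m.central, mul_assoc]

lemma snd_mul (m : 𝓜(ℂ, A)) (a b : A) : m.snd (a * b) = a * m.snd b := by
  have := congr_arg star (fst_mul (star m) (star b) (star a))
  simpa using this

lemma norm_fst_le (m : 𝓜(ℂ, A)) {u : A} (hu : ‖u‖ ≤ 1) : ‖m.fst u‖ ≤ ‖m‖ := by
  rw [← m.norm_fst]
  exact m.fst.unit_le_opNorm u hu

lemma norm_snd_le (m : 𝓜(ℂ, A)) {u : A} (hu : ‖u‖ ≤ 1) : ‖m.snd u‖ ≤ ‖m‖ := by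
  rw [← m.norm_snd]
  exact m.snd.unit_le_opNorm u hu

lemma norm_coe_eq (a : A) : ‖(a : 𝓜(ℂ, A))‖ = ‖a‖ := by
  rw [← norm_fst, coe_fst, ContinuousLinearMap.opNorm_mul_apply]

lemma mul_coe_eq (m : 𝓜(ℂ, A)) (a : A) : m * (a : 𝓜(ℂ, A)) = (m.fst a : A) := by
  refine DoubleCentralizer.ext ℂ A _ _ (Prod.ext ?_ ?_) <;> ext b
  · simp [fst_mul]
  · simp [m.central]

lemma coe_mul_eq (m : 𝓜(ℂ, A)) (a : A) : (a : 𝓜(ℂ, A)) * m = (m.snd a : A) := by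
  refine DoubleCentralizer.ext ℂ A _ _ (Prod.ext ?_ ?_) <;> ext b
  · simp [m.central]
  · simp [snd_mul]

lemma coe_sub_eq (a b : A) : ((a - b : A) : 𝓜(ℂ, A)) = a - b :=
  map_sub (DoubleCentralizer.coeHom (𝕜 := ℂ) (A := A)) a b

lemma coe_mul (a b : A) : ((a * b : A) : 𝓜(ℂ, A)) = a * b :=
  map_mul (DoubleCentralizer.coeHom (𝕜 := ℂ) (A := A)) a b

lemma coe_star (a : A) : ((star a : A) : 𝓜(ℂ, A)) = star (a : 𝓜(ℂ, A)) :=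
  map_star (DoubleCentralizer.coeHom (𝕜 := ℂ) (A := A)) a

lemma tendsto_coe_iff {X : Type*} {l : Filter X} {f : X → A} {a : A} :
    Tendsto (fun x => (f x : 𝓜(ℂ, A))) l (𝓝 (a : 𝓜(ℂ, A))) ↔ Tendsto f l (𝓝 a) := by
  rw [tendsto_iff_norm_sub_tendsto_zero, tendsto_iff_norm_sub_tendsto_zero (f := f)]
  simp only [← coe_sub_eq, norm_coe_eq]

end DoubleCentralizer

namespace CStarAction

open DoubleCentralizer

variable (S : CStarAction 𝔄 A)

lemma star_act (a : A) (α : 𝔄) : star (S.act a α) = S.lact (star α) (star a) := by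
  simp [lact]

lemma iotaM_fst (hbi : S.Biaction) (α : 𝔄) (a : A) : (S.iotaM hbi α).fst a = S.lact α a := rfl

lemma iotaM_snd (hbi : S.Biaction) (α : 𝔄) (a : A) : (S.iotaM hbi α).snd a = S.act a α := rfl

lemma iotaM_mul (hbi : S.Biaction) (α β : 𝔄) :
    S.iotaM hbi (α * β) = S.iotaM hbi α * S.iotaM hbi β := by
  refine DoubleCentralizer.ext ℂ A _ _ (Prod.ext ?_ ?_) <;> ext b
  · simp [iotaM_fst, lact, S.act_mul]
  · simp [iotaM_snd, S.act_mul]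

lemma iotaM_star (hbi : S.Biaction) (α : 𝔄) :
    S.iotaM hbi (star α) = star (S.iotaM hbi α) := by
  refine DoubleCentralizer.ext ℂ A _ _ (Prod.ext ?_ ?_) <;> ext b
  · simp [iotaM_fst, iotaM_snd, lact]
  · simp [iotaM_fst, iotaM_snd, lact]

lemma coe_act (hbi : S.Biaction) (a : A) (α : 𝔄) :
    ((S.act a α : A) : 𝓜(ℂ, A)) = a * S.iotaM hbi α := by
  rw [coe_mul_eq, iotaM_snd]

end CStarAction

end Multiplier

section PositiveModuleMap

variable [PartialOrder 𝔄] [StarOrderedRing 𝔄] [PartialOrder A] [StarOrderedRing A]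

lemma IsRetraction.exists_continuousLinearMap {S : CStarAction 𝔄 A} {τ : A → 𝔄}
    (h : IsRetraction S τ) : ∃ T : A →L[ℂ] 𝔄, ⇑T = τ := by
  let f : A →ₗ[ℂ] 𝔄 := { toFun := τ, map_add' := h.map_add, map_smul' := h.map_smulC }
  let F : A →ₚ[ℂ] 𝔄 := PositiveLinearMap.mk₀ f fun x hx => by
    obtain ⟨b, rfl⟩ := CStarAlgebra.nonneg_iff_eq_star_mul_self.1 hx
    exact isPosElem_iff_nonneg.1 (h.pos b)
  exact ⟨⟨f, map_continuous F⟩, rfl⟩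

lemma map_star_of_map_nonneg {T : A →L[ℂ] 𝔄} (hT : ∀ a, 0 ≤ a → 0 ≤ T a) (a : A) :
    T (star a) = star (T a) := by
  let F : A →ₚ[ℂ] 𝔄 := PositiveLinearMap.mk₀ (T : A →ₗ[ℂ] 𝔄) hT
  exact map_star F a

/-- A positive `𝔄`-module map `T : A → 𝔄` sending some bounded approximate identity of `A` to
a unit `p` of `𝔄` in norm. -/
structure IsUnitalModuleMap (S : CStarAction 𝔄 A) (T : A →L[ℂ] 𝔄) (p : 𝔄) : Prop where
  map_nonneg : ∀ a, 0 ≤ a → 0 ≤ T a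
  map_act : ∀ a α, T (S.act a α) = T a * α
  unit_mul : ∀ α, p * α = α
  mul_unit : ∀ α, α * p = α
  exists_boundedApproximateIdentity : ∃ l : Filter A, l.NeBot ∧ (∃ C : ℝ, ∀ᶠ e in l, ‖e‖ ≤ C) ∧
    (∀ a : A, Tendsto (fun e => e * a) l (𝓝 a)) ∧ Tendsto T l (𝓝 p)

lemma IsRetraction.exists_isUnitalModuleMap {S : CStarAction 𝔄 A} {T : A →L[ℂ] 𝔄}
    (h : IsRetraction S T) : ∃ p, IsUnitalModuleMap S T p := by
  have hT (a : A) (ha : 0 ≤ a) : 0 ≤ T a := by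
    obtain ⟨b, rfl⟩ := CStarAlgebra.nonneg_iff_eq_star_mul_self.1 ha
    exact isPosElem_iff_nonneg.1 (h.pos b)
  obtain ⟨l, p, hne, ⟨C, hC⟩, hl, -, hp, hpp, hTl, hTr⟩ := h.bai
  have hzero {a : A} (ha : 0 ≤ a) (ha1 : ‖a‖ < 1) (α : 𝔄) : T a * (α - p * α) = 0 := by
    set β := α - p * α
    have hpβ : p * β = 0 := by simp [β, mul_sub, ← mul_assoc, hpp]
    have hle : star β * T a * β ≤ 0 := by
      refine le_of_forall_positive_functional fun f hf => ?_
      let R : 𝔄 →L[ℝ] 𝔄 := (ContinuousLinearMap.mul ℝ 𝔄).flip β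
      let L : 𝔄 →L[ℝ] 𝔄 := ContinuousLinearMap.mul ℝ 𝔄 (star β)
      let g : A →L[ℝ] ℝ := f ∘L R ∘L L ∘L T.restrictScalars ℝ
      have hg (x : A) : g x = f (star β * T x * β) := rfl
      have hlim : Tendsto (fun e => g (e + star e)) l (𝓝 (2 * 0)) := by
        have h1 : Tendsto (fun e => star β * (T e * β)) l (𝓝 0) := by
          have := (hTl β).const_mul (star β)
          rwa [hpβ, mul_zero] at this
        have h2 := h1.add h1.star
        have h3 := (f.continuous.tendsto _).comp h2
        simp only [star_zero, add_zero, map_zero, mul_zero] at h3 ⊢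
        refine h3.congr fun e => ?_
        simp [hg, map_star_of_map_nonneg hT, mul_add, add_mul, mul_assoc]
      have hlub := isLUB_of_tendsto_boundedApproximateIdentity (g := g)
        (fun x hx => hf _ (star_left_conjugate_nonneg (hT x hx) β)) hC hl hlim
      rw [map_zero]
      exact hlub.1 ⟨a, ⟨ha, ha1⟩, rfl⟩
    obtain ⟨c, hc⟩ := CStarAlgebra.nonneg_iff_eq_star_mul_self.1 (hT a ha)
    have hcβ : c * β = 0 := by
      rw [← CStarRing.star_mul_self_eq_zero_iff]
      refine le_antisymm ?_ (star_mul_self_nonneg _)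
      simpa [hc, mul_assoc] using hle
    rw [hc, mul_assoc, hcβ, mul_zero]
  have hTp (a : A) : p * T a = T a := by
    have hspan : a ∈ Submodule.span ℂ ({x : A | 0 ≤ x} ∩ Metric.ball 0 1) := by
      simp [CStarAlgebra.span_nonneg_inter_unitBall]
    induction hspan using Submodule.span_induction with
    | mem x hx =>
      have hx1 : ‖x‖ < 1 := by simpa using hx.2
      have hTx : star (T x) = T x := (hT x hx.1).star_eq
      have h1 : T x - T x * p = 0 := by
        rw [← CStarRing.mul_star_self_eq_zero_iff]
        have := hzero hx.1 hx1 (star (T x - T x * p))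
        rwa [mul_sub, ← mul_assoc, ← sub_mul] at this
      have h2 := congr_arg star (sub_eq_zero.1 h1)
      rw [star_mul, hp, hTx] at h2
      exact h2.symm
    | zero => simp
    | add x y _ _ hx hy => rw [_root_.map_add, mul_add, hx, hy]
    | smul c x _ hx => rw [map_smul, mul_smul_comm, hx]
  have hpβα (β α : 𝔄) : p * (β * α) = β * α := by
    refine eq_of_forall_dist_le fun ε hε => ?_
    obtain ⟨a, ha⟩ := h.strict_dense β (ε / (‖p‖ + 1)) (by positivity) {α}
    have ha := ha α (Finset.mem_singleton_self α)
    have hid : p * (β * α) - β * α =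
        (T (S.act a α) - β * α) - p * (T (S.act a α) - β * α) := by
      rw [mul_sub, hTp]
      abel
    rw [dist_eq_norm, hid]
    calc _ ≤ ‖T (S.act a α) - β * α‖ + ‖p‖ * ‖T (S.act a α) - β * α‖ :=
          (norm_sub_le _ _).trans (by gcongr; exact norm_mul_le _ _)
      _ = (‖p‖ + 1) * ‖T (S.act a α) - β * α‖ := by ring
      _ ≤ (‖p‖ + 1) * (ε / (‖p‖ + 1)) := by gcongr
      _ = ε := by field_simp
  have hunit (β : 𝔄) : p * β = β := by
    rw [← sub_eq_zero, ← CStarRing.mul_star_self_eq_zero_iff, sub_mul, mul_assoc, hpβα, sub_self]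
  have hunit' (β : 𝔄) : β * p = β := by
    have := congr_arg star (hunit (star β))
    rwa [star_mul, star_star, hp] at this
  refine ⟨p, hT, h.map_act, hunit, hunit', l, hne, ⟨C, hC⟩, hl, ?_⟩
  have := hTl p
  simpa only [hunit'] using this

namespace IsUnitalModuleMap

variable {S : CStarAction 𝔄 A} {T : A →L[ℂ] 𝔄} {p : 𝔄}

lemma unit_nonneg (h : IsUnitalModuleMap S T p) : 0 ≤ p := by
  have h1 : star p = p := by
    rw [← h.mul_unit (star p), ← star_star p, ← star_mul]
    simp [h.mul_unit]
  have := star_mul_self_nonneg p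
  rwa [h1, h.mul_unit] at this

lemma map_star (h : IsUnitalModuleMap S T p) (a : A) : T (star a) = star (T a) :=
  map_star_of_map_nonneg h.map_nonneg a

lemma map_mono (h : IsUnitalModuleMap S T p) {a b : A} (hab : a ≤ b) : T a ≤ T b := by
  simpa using h.map_nonneg _ (sub_nonneg.2 hab)

lemma isLUB (h : IsUnitalModuleMap S T p) {f : 𝔄 →L[ℝ] ℝ} (hf : ∀ y, 0 ≤ y → 0 ≤ f y) :
    IsLUB ((fun a => f (T a)) '' {x | 0 ≤ x ∧ ‖x‖ < 1}) (f p) := by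
  obtain ⟨l, hne, ⟨C, hC⟩, hl, hTl⟩ := h.exists_boundedApproximateIdentity
  refine isLUB_of_tendsto_boundedApproximateIdentity (g := f ∘L T.restrictScalars ℝ)
    (fun x hx => hf _ (h.map_nonneg x hx)) hC hl ?_
  have h1 := (f.continuous.tendsto _).comp (hTl.add hTl.star)
  rw [h.unit_nonneg.star_eq, map_add, ← two_mul] at h1
  refine h1.congr fun e => ?_
  simp [h.map_star]

lemma map_le_unit (h : IsUnitalModuleMap S T p) {a : A} (ha : 0 ≤ a) (ha1 : ‖a‖ ≤ 1) :
    T a ≤ p :=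
  le_of_forall_positive_functional fun f hf =>
    apply_le_of_norm_le_one (g := f ∘L T.restrictScalars ℝ)
      (fun _ hx hx1 => (h.isLUB hf).1 ⟨_, ⟨hx, hx1⟩, rfl⟩) ha ha1

end IsUnitalModuleMap

end PositiveModuleMap

section UnitFilter

namespace IsUnitalModuleMap

variable {T : A →L[ℂ] 𝔄} {p : 𝔄}

lemma norm_map_fst_sub_map_snd_le {u v : A} {ε : ℝ} (hε : 0 ≤ ε)
    (hu : ∀ x, ‖T x - T (x * u)‖ ≤ ε * ‖x‖) (hv : ∀ x, ‖T x - T (v * x)‖ ≤ ε * ‖x‖)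
    (hu1 : ‖u‖ ≤ 1) (hv1 : ‖v‖ ≤ 1) (m : 𝓜(ℂ, A)) :
    ‖T (m.fst u) - T (m.snd v)‖ ≤ 2 * ε * ‖m‖ := by
  have hid : T (m.fst u) - T (m.snd v) =
      (T (m.fst u) - T (v * m.fst u)) - (T (m.snd v) - T (m.snd v * u)) := by
    rw [m.central]
    abel
  rw [hid]
  calc _ ≤ ε * ‖m.fst u‖ + ε * ‖m.snd v‖ := (norm_sub_le _ _).trans (add_le_add (hv _) (hu _))
    _ ≤ ε * ‖m‖ + ε * ‖m‖ := by
      gcongr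
      exacts [DoubleCentralizer.norm_fst_le m hu1, DoubleCentralizer.norm_snd_le m hv1]
    _ = 2 * ε * ‖m‖ := by ring

variable [PartialOrder A]

variable (T p) in
/-- The filter of positive elements `u` of the open unit ball along which `T u` tends to `p`. -/
def unitFilter : Filter A := comap T (𝓝 p) ⊓ 𝓟 {u | 0 ≤ u ∧ ‖u‖ < 1}

lemma tendsto_unitFilter : Tendsto T (unitFilter T p) (𝓝 p) :=
  tendsto_comap.mono_left inf_le_left

lemma eventually_unitFilter : ∀ᶠ u in unitFilter T p, 0 ≤ u ∧ ‖u‖ < 1 :=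
  mem_inf_of_right (mem_principal_self _)

end IsUnitalModuleMap

end UnitFilter

section Extension

variable [PartialOrder 𝔄] [StarOrderedRing 𝔄] [PartialOrder A] [StarOrderedRing A]

namespace IsUnitalModuleMap

variable {S : CStarAction 𝔄 A} {T : A →L[ℂ] 𝔄} {p : 𝔄}

lemma norm_unit_le (h : IsUnitalModuleMap S T p) : ‖p‖ ≤ 1 := by
  have h1 : ‖p‖ * ‖p‖ = ‖p‖ := by
    rw [← CStarRing.norm_star_mul_self, h.unit_nonneg.star_eq, h.mul_unit]
  nlinarith [norm_nonneg p, sq_nonneg (‖p‖ - 1)]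

lemma norm_map_le_of_nonneg (h : IsUnitalModuleMap S T p) {a : A} (ha : 0 ≤ a) :
    ‖T a‖ ≤ ‖a‖ := by
  rcases eq_or_ne a 0 with rfl | ha0
  · simp
  have hpos : 0 < ‖a‖ := norm_pos_iff.2 ha0
  have h1 : ‖T ((‖a‖⁻¹ : ℝ) • a)‖ ≤ 1 := by
    have hna : 0 ≤ (‖a‖⁻¹ : ℝ) • a := smul_nonneg (by positivity) ha
    refine (CStarAlgebra.norm_le_norm_of_nonneg_of_le (h.map_nonneg _ hna)
      (h.map_le_unit hna ?_)).trans h.norm_unit_le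
    rw [norm_smul, norm_inv, norm_norm, inv_mul_cancel₀ hpos.ne']
  rw [T.map_smul_of_tower, norm_smul, norm_inv, norm_norm, inv_mul_le_iff₀ hpos,
    mul_one] at h1
  exact h1

lemma map_lact (h : IsUnitalModuleMap S T p) (α : 𝔄) (a : A) : T (S.lact α a) = α * T a := by
  rw [CStarAction.lact, h.map_star, h.map_act, h.map_star]
  simp

lemma map_star_act_mul (h : IsUnitalModuleMap S T p) (hbi : S.Biaction) (y : A) (β : 𝔄) (x : A) :
    T (star (S.act y β) * x) = star β * T (star y * x) := by
  rw [S.star_act, ← h.map_lact]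
  exact congr_arg T (DoubleCentralizer.fst_mul (S.iotaM hbi (star β)) (star y) x).symm

/-- The Cauchy–Schwarz inequality for a positive module map. -/
lemma norm_map_star_mul_sq_le (h : IsUnitalModuleMap S T p) (hbi : S.Biaction) (y z : A) :
    ‖T (star y * z)‖ ^ 2 ≤ ‖y‖ ^ 2 * ‖T (star z * z)‖ := by
  rcases eq_or_ne y 0 with rfl | hy
  · simp
  have hpos : 0 < ‖y‖ ^ 2 := by have := norm_pos_iff.2 hy; positivity
  set c := ‖y‖ ^ 2 with hc
  set β := T (star y * z) with hβ
  have hβ' : T (star z * y) = star β := by rw [hβ, ← h.map_star]; simp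
  have hyy : star β * T (star y * y) * β ≤ c • (star β * β) := by
    have hn := star_mul_self_nonneg y
    have hb : ‖T (star y * y)‖ ≤ c := by
      refine (h.norm_map_le_of_nonneg hn).trans_eq ?_
      rw [CStarRing.norm_star_mul_self, hc, sq]
    exact (CStarAlgebra.star_left_conjugate_le_norm_smul (h.map_nonneg _ hn).isSelfAdjoint).trans
      (smul_le_smul_of_nonneg_right hb (star_mul_self_nonneg β))
  have hw : T (star (S.act y β - c • z) * (S.act y β - c • z)) =
      star β * T (star y * y) * β - (2 * c) • (star β * β) + (c * c) • T (star z * z) := by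
    simp only [star_sub, star_smul, star_trivial, sub_mul, mul_sub, map_sub, smul_mul_assoc,
      mul_smul_comm, T.map_smul_of_tower, h.map_star_act_mul hbi, ← S.mul_act, h.map_act, hβ', ← hβ,
      mul_smul, smul_sub, mul_assoc, two_mul, add_smul]
    abel
  have h1 : c • (star β * β) ≤ (c * c) • T (star z * z) := by
    have h2 := h.map_nonneg _ (star_mul_self_nonneg (S.act y β - c • z))
    rw [hw] at h2
    have h3 := h2.trans (add_le_add_left (sub_le_sub_right hyy _) _)
    rw [two_mul, add_smul] at h3
    rw [← sub_nonneg]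
    convert h3 using 1
    abel
  have h4 := CStarAlgebra.norm_le_norm_of_nonneg_of_le
    (smul_nonneg hpos.le (star_mul_self_nonneg β)) h1
  rw [norm_smul, norm_smul, CStarRing.norm_star_mul_self, norm_mul, Real.norm_of_nonneg hpos.le,
    mul_assoc, mul_le_mul_iff_right₀ hpos, ← sq] at h4
  exact h4

lemma norm_map_le (h : IsUnitalModuleMap S T p) (hbi : S.Biaction) (x : A) : ‖T x‖ ≤ ‖x‖ := by
  have hau := CStarAlgebra.increasingApproximateUnit A
  have hne := hau.neBot
  have hlim : Tendsto (fun v => ‖T (v * x)‖) (CStarAlgebra.approximateUnit A) (𝓝 ‖T x‖) :=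
    (T.continuous.norm.tendsto _).comp (hau.tendsto_mul_right x)
  refine le_of_tendsto hlim ?_
  filter_upwards [hau.eventually_norm] with v hv
  have h1 := h.norm_map_star_mul_sq_le hbi (star v) x
  have h2 := h.norm_map_le_of_nonneg (star_mul_self_nonneg x)
  rw [star_star, norm_star] at h1
  rw [CStarRing.norm_star_mul_self] at h2
  refine abs_le_of_sq_le_sq' ?_ (norm_nonneg x) |>.2
  have h3 : ‖v‖ ^ 2 ≤ 1 := pow_le_one₀ (norm_nonneg v) hv
  calc _ ≤ ‖v‖ ^ 2 * ‖T (star x * x)‖ := h1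
    _ ≤ 1 * (‖x‖ * ‖x‖) := by gcongr
    _ = ‖x‖ ^ 2 := by ring

lemma exists_norm_unit_sub_le (h : IsUnitalModuleMap S T p) {ε : ℝ} (hε : 0 < ε) :
    ∃ u : A, 0 ≤ u ∧ ‖u‖ < 1 ∧ ‖p - T u‖ ≤ ε := by
  let D : Set 𝔄 := {x | ∃ u : A, 0 ≤ u ∧ ‖u‖ < 1 ∧ x ≤ T u}
  have hconv : Convex ℝ D := by
    rintro x ⟨u, hu, hu1, hxu⟩ y ⟨v, hv, hv1, hyv⟩ a b ha hb hab
    refine ⟨a • u + b • v, add_nonneg (smul_nonneg ha hu) (smul_nonneg hb hv), ?_, ?_⟩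
    · have := convex_ball (0 : A) 1 (by simpa using hu1) (by simpa using hv1) ha hb hab
      simpa using this
    · rw [map_add, T.map_smul_of_tower, T.map_smul_of_tower]
      exact add_le_add (smul_le_smul_of_nonneg_left hxu ha) (smul_le_smul_of_nonneg_left hyv hb)
  have hp : p ∈ closure D := by
    by_contra hp
    obtain ⟨f, s, hfs, hsp⟩ := geometric_hahn_banach_closed_point hconv.closure isClosed_closure hp
    have hfD (x : 𝔄) (hx : x ∈ D) : f x < s := hfs x (subset_closure hx)
    have hs : 0 < s := by simpa using hfD 0 ⟨0, by simp⟩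
    have hf (y : 𝔄) (hy : 0 ≤ y) : 0 ≤ f y := by
      by_contra! hy'
      have := hfD ((s / f y) • y) ⟨0, le_rfl, by simp, by
        simpa using smul_nonpos_of_nonpos_of_nonneg
          (div_nonpos_of_nonneg_of_nonpos hs.le hy'.le) hy⟩
      rw [map_smul, smul_eq_mul, div_mul_cancel₀ _ hy'.ne] at this
      exact this.false
    refine hsp.not_ge ((h.isLUB hf).2 ?_)
    rintro _ ⟨u, ⟨hu, hu1⟩, rfl⟩
    exact (hfD _ ⟨u, hu, hu1, le_rfl⟩).le
  obtain ⟨x, ⟨u, hu, hu1, hxu⟩, hx⟩ := Metric.mem_closure_iff.1 hp ε hε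
  refine ⟨u, hu, hu1, ?_⟩
  rw [dist_eq_norm] at hx
  exact (CStarAlgebra.norm_le_norm_of_nonneg_of_le (sub_nonneg.2 (h.map_le_unit hu hu1.le))
    (sub_le_sub_left hxu p)).trans hx.le

/-- If `T u` is close to the unit, then `T` is almost concentrated on `u`. -/
lemma norm_map_sub_map_mul_le (h : IsUnitalModuleMap S T p) (hbi : S.Biaction) {u : A}
    (hu : 0 ≤ u) (hu1 : ‖u‖ < 1) {ε : ℝ} (hε : 0 ≤ ε) (hpu : ‖p - T u‖ ≤ ε ^ 2) (x : A) :
    ‖T x - T (x * u)‖ ≤ ε * ‖x‖ := by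
  have hau := CStarAlgebra.increasingApproximateUnit A
  have hne := hau.neBot
  have hlim : Tendsto (fun v => ‖T (x * v) - T (x * u)‖) (CStarAlgebra.approximateUnit A)
      (𝓝 ‖T x - T (x * u)‖) :=
    (((T.continuous.tendsto _).comp (hau.tendsto_mul_left x)).sub_const _).norm
  refine le_of_tendsto hlim ?_
  filter_upwards [hau.eventually_norm,
    (CStarAlgebra.hasBasis_approximateUnit A).mem_of_mem ⟨hu, hu1⟩] with v hv hvu
  have huv : u ≤ v := hvu.1
  have hd : 0 ≤ v - u := sub_nonneg.2 huv
  have hd1 : ‖v - u‖ ≤ 1 :=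
    (CStarAlgebra.norm_le_norm_of_nonneg_of_le hd (sub_le_self v hu)).trans hv
  have hTd : ‖T (star (v - u) * (v - u))‖ ≤ ε ^ 2 := by
    rw [hd.star_eq]
    refine (CStarAlgebra.norm_le_norm_of_nonneg_of_le (h.map_nonneg _ ?_)
      ((h.map_mono (mul_self_le_self_of_norm_le_one hd hd1)).trans ?_)).trans hpu
    · simpa [hd.star_eq] using star_mul_self_nonneg (v - u)
    · rw [map_sub]
      exact sub_le_sub_right (h.map_le_unit (hu.trans huv) hv) _
  rw [← map_sub, ← mul_sub]
  refine abs_le_of_sq_le_sq' ?_ (by positivity) |>.2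
  have h1 := h.norm_map_star_mul_sq_le hbi (star x) (v - u)
  rw [star_star, norm_star] at h1
  calc _ ≤ ‖x‖ ^ 2 * ‖T (star (v - u) * (v - u))‖ := h1
    _ ≤ ‖x‖ ^ 2 * ε ^ 2 := by gcongr
    _ = (ε * ‖x‖) ^ 2 := by ring

lemma norm_map_sub_map_mul_le' (h : IsUnitalModuleMap S T p) (hbi : S.Biaction) {u : A}
    (hu : 0 ≤ u) (hu1 : ‖u‖ < 1) {ε : ℝ} (hε : 0 ≤ ε) (hpu : ‖p - T u‖ ≤ ε ^ 2) (x : A) :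
    ‖T x - T (u * x)‖ ≤ ε * ‖x‖ := by
  have h1 := h.norm_map_sub_map_mul_le hbi hu hu1 hε hpu (star x)
  rw [← map_sub, ← norm_star, ← h.map_star] at h1
  simpa [hu.star_eq] using h1

lemma unitFilter_neBot (h : IsUnitalModuleMap S T p) : (unitFilter T p).NeBot := by
  rw [unitFilter, (Metric.nhds_basis_ball.comap T).inf_principal_neBot_iff]
  intro ε hε
  obtain ⟨u, hu, hu1, hpu⟩ := h.exists_norm_unit_sub_le (half_pos hε)
  refine ⟨u, ?_, hu, hu1⟩
  rw [Set.mem_preimage, Metric.mem_ball, dist_comm, dist_eq_norm]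
  linarith

lemma eventually_norm_map_sub_le (h : IsUnitalModuleMap S T p) (hbi : S.Biaction) {ε : ℝ}
    (hε : 0 < ε) : ∀ᶠ u in unitFilter T p,
      (∀ x, ‖T x - T (x * u)‖ ≤ ε * ‖x‖) ∧ ∀ x, ‖T x - T (u * x)‖ ≤ ε * ‖x‖ := by
  have hball := tendsto_unitFilter (T := T) (p := p)
    (Metric.closedBall_mem_nhds p (pow_pos hε 2))
  filter_upwards [eventually_unitFilter, hball] with u hu hpu
  have hpu : ‖p - T u‖ ≤ ε ^ 2 := by
    rwa [Set.mem_preimage, Metric.mem_closedBall, dist_comm, dist_eq_norm] at hpu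
  exact ⟨h.norm_map_sub_map_mul_le hbi hu.1 hu.2 hε.le hpu,
    h.norm_map_sub_map_mul_le' hbi hu.1 hu.2 hε.le hpu⟩

lemma exists_tendsto (h : IsUnitalModuleMap S T p) (hbi : S.Biaction) (m : 𝓜(ℂ, A)) :
    ∃ t, Tendsto (fun u => T (m.fst u)) (unitFilter T p) (𝓝 t) ∧
      Tendsto (fun u => T (m.snd u)) (unitFilter T p) (𝓝 t) := by
  have hne := h.unitFilter_neBot
  have key {ε : ℝ} (hε : 0 < ε) : ∃ s ∈ unitFilter T p, ∀ u ∈ s, ∀ v ∈ s,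
      ‖T (m.fst u) - T (m.snd v)‖ < ε := by
    have hδ : 0 < ε / (2 * (‖m‖ + 1)) := by positivity
    refine ⟨_, (h.eventually_norm_map_sub_le hbi hδ).and eventually_unitFilter,
      fun u hu v hv => ?_⟩
    refine (norm_map_fst_sub_map_snd_le hδ.le hu.1.1 hv.1.2 hu.2.2.le hv.2.2.le m).trans_lt ?_
    have : 2 * (ε / (2 * (‖m‖ + 1))) * ‖m‖ = ε * (‖m‖ / (‖m‖ + 1)) := by field_simp
    rw [this]
    exact mul_lt_of_lt_one_right hε ((div_lt_one (by positivity)).2 (by linarith))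
  have hcauchy : Cauchy (map (fun u => T (m.fst u)) (unitFilter T p)) := by
    refine Metric.cauchy_iff.2 ⟨hne.map _, fun ε hε => ?_⟩
    obtain ⟨s, hs, hsε⟩ := key (half_pos hε)
    refine ⟨_, image_mem_map hs, ?_⟩
    rintro _ ⟨u, hu, rfl⟩ _ ⟨v, hv, rfl⟩
    have h1 := hsε u hu u hu
    have h2 := hsε v hv u hu
    rw [← dist_eq_norm] at h1 h2
    exact (dist_triangle_right _ _ _).trans_lt (by linarith)
  obtain ⟨t, ht⟩ := cauchy_map_iff_exists_tendsto.1 hcauchy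
  refine ⟨t, ht, ?_⟩
  have hsub : Tendsto (fun u => T (m.fst u) - T (m.snd u)) (unitFilter T p) (𝓝 0) := by
    refine Metric.tendsto_nhds.2 fun ε hε => ?_
    obtain ⟨s, hs, hsε⟩ := key hε
    filter_upwards [hs] with u hu
    simpa using hsε u hu u hu
  simpa using ht.sub hsub

/-- A linear map `M(A) → 𝔄` obtained from `T` as a limit along `unitFilter T p`. -/
structure IsMultiplierExtension (T : A →L[ℂ] 𝔄) (p : 𝔄) (E : 𝓜(ℂ, A) →ₗ[ℂ] 𝔄) : Prop where
  tendsto_fst : ∀ m : 𝓜(ℂ, A), Tendsto (fun u => T (m.fst u)) (unitFilter T p) (𝓝 (E m))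
  tendsto_snd : ∀ m : 𝓜(ℂ, A), Tendsto (fun u => T (m.snd u)) (unitFilter T p) (𝓝 (E m))

lemma exists_isMultiplierExtension (h : IsUnitalModuleMap S T p) (hbi : S.Biaction) :
    ∃ E : 𝓜(ℂ, A) →ₗ[ℂ] 𝔄, IsMultiplierExtension T p E := by
  have hne := h.unitFilter_neBot
  choose E hfst hsnd using h.exists_tendsto hbi
  refine ⟨{ toFun := E, map_add' := fun x y => ?_, map_smul' := fun c x => ?_ }, hfst, hsnd⟩
  · refine tendsto_nhds_unique (hfst (x + y)) (((hfst x).add (hfst y)).congr fun u => ?_)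
    simp
  · refine tendsto_nhds_unique (hfst (c • x)) (((hfst x).const_smul c).congr fun u => ?_)
    simp

namespace IsMultiplierExtension

variable {E : 𝓜(ℂ, A) →ₗ[ℂ] 𝔄}

lemma map_star (hE : IsMultiplierExtension T p E) (h : IsUnitalModuleMap S T p) (m : 𝓜(ℂ, A)) :
    E (star m) = star (E m) := by
  have hne := h.unitFilter_neBot
  refine tendsto_nhds_unique (hE.tendsto_fst (star m)) ((hE.tendsto_snd m).star.congr' ?_)
  filter_upwards [eventually_unitFilter] with u hu
  rw [← h.map_star, DoubleCentralizer.star_fst, hu.1.star_eq]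

lemma norm_map_le (hE : IsMultiplierExtension T p E) (h : IsUnitalModuleMap S T p)
    (hbi : S.Biaction) (m : 𝓜(ℂ, A)) : ‖E m‖ ≤ ‖m‖ := by
  have hne := h.unitFilter_neBot
  refine le_of_tendsto (hE.tendsto_fst m).norm ?_
  filter_upwards [eventually_unitFilter] with u hu
  exact (h.norm_map_le hbi _).trans (DoubleCentralizer.norm_fst_le m hu.2.le)

lemma norm_sub_map_fst_le (hE : IsMultiplierExtension T p E) (h : IsUnitalModuleMap S T p)
    (hbi : S.Biaction) {ε : ℝ} (hε : 0 < ε) :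
    ∀ᶠ u in unitFilter T p, ∀ m : 𝓜(ℂ, A), ‖T (m.fst u) - E m‖ ≤ 2 * ε * ‖m‖ := by
  have hne := h.unitFilter_neBot
  have hev := (h.eventually_norm_map_sub_le hbi hε).and eventually_unitFilter
  filter_upwards [hev] with u hu m
  refine le_of_tendsto ((hE.tendsto_snd m).const_sub _).norm ?_
  filter_upwards [hev] with v hv
  exact norm_map_fst_sub_map_snd_le hε.le hu.1.1 hv.1.2 hu.2.2.le hv.2.2.le m

lemma map_coe (hE : IsMultiplierExtension T p E) (h : IsUnitalModuleMap S T p)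
    (hbi : S.Biaction) (a : A) : E (a : 𝓜(ℂ, A)) = T a := by
  have hne := h.unitFilter_neBot
  refine tendsto_nhds_unique (hE.tendsto_fst a) (Metric.tendsto_nhds.2 fun ε hε => ?_)
  have hδ : 0 < ε / (‖a‖ + 1) := by positivity
  filter_upwards [h.eventually_norm_map_sub_le hbi hδ] with u hu
  rw [dist_comm, dist_eq_norm]
  refine (hu.1 a).trans_lt ?_
  rw [div_mul_eq_mul_div, div_lt_iff₀ (by positivity)]
  linarith

lemma map_mul_iotaM (hE : IsMultiplierExtension T p E) (h : IsUnitalModuleMap S T p)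
    (hbi : S.Biaction) (m : 𝓜(ℂ, A)) (α : 𝔄) : E (m * S.iotaM hbi α) = E m * α := by
  have hne := h.unitFilter_neBot
  refine tendsto_nhds_unique (hE.tendsto_snd _) (((hE.tendsto_snd m).mul_const α).congr fun u => ?_)
  rw [← h.map_act]
  rfl

lemma map_iotaM_mul (hE : IsMultiplierExtension T p E) (h : IsUnitalModuleMap S T p)
    (hbi : S.Biaction) (m : 𝓜(ℂ, A)) (α : 𝔄) : E (S.iotaM hbi α * m) = α * E m := by
  have := hE.map_mul_iotaM h hbi (star m) (star α)
  rw [S.iotaM_star, ← star_mul, hE.map_star h, hE.map_star h, ← star_mul] at this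
  exact star_injective this

lemma map_iotaM (hE : IsMultiplierExtension T p E) (h : IsUnitalModuleMap S T p)
    (hbi : S.Biaction) (α : 𝔄) : E (S.iotaM hbi α) = α := by
  have hne := h.unitFilter_neBot
  refine tendsto_nhds_unique (hE.tendsto_snd _) ?_
  have hlim := (tendsto_unitFilter (T := T) (p := p)).mul_const α
  rw [h.unit_mul] at hlim
  exact hlim.congr fun u => (h.map_act u α).symm

lemma map_star_mul_self_nonneg (hE : IsMultiplierExtension T p E) (h : IsUnitalModuleMap S T p)
    (hbi : S.Biaction) (m : 𝓜(ℂ, A)) : 0 ≤ E (star m * m) := by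
  have hne := h.unitFilter_neBot
  have hlim : Tendsto (fun u => T (u * (star m * m).fst u)) (unitFilter T p)
      (𝓝 (E (star m * m))) := by
    have hsub : Tendsto (fun u => T ((star m * m).fst u) - T (u * (star m * m).fst u))
        (unitFilter T p) (𝓝 0) := by
      refine Metric.tendsto_nhds.2 fun ε hε => ?_
      have hδ : 0 < ε / (‖star m * m‖ + 1) := by positivity
      filter_upwards [h.eventually_norm_map_sub_le hbi hδ, eventually_unitFilter] with u hu hu1
      rw [dist_zero_right]
      refine (hu.2 _).trans_lt ?_
      rw [div_mul_eq_mul_div, div_lt_iff₀ (by positivity)]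
      have := DoubleCentralizer.norm_fst_le (star m * m) hu1.2.le
      nlinarith
    simpa using (hE.tendsto_fst (star m * m)).sub hsub
  refine CStarAlgebra.isClosed_nonneg.mem_of_tendsto hlim ?_
  filter_upwards [eventually_unitFilter] with u hu
  refine h.map_nonneg _ ?_
  have hid : u * (star m * m).fst u = star (m.fst u) * m.fst u := by
    have := (star m).central u (m.fst u)
    rw [DoubleCentralizer.star_snd, hu.1.star_eq] at this
    exact this.symm
  rw [hid]
  exact star_mul_self_nonneg _

lemma isCPMap (hE : IsMultiplierExtension T p E) (h : IsUnitalModuleMap S T p)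
    (hbi : S.Biaction) : IsCPMap E := by
  rintro n M ⟨m, b, hb⟩
  refine matPos_of_forall_sum_nonneg _ (fun i j => ?_) fun α => ?_
  · rw [← hE.map_star h, hb, hb, star_sum]
    simp
  · have hid : ∑ i, ∑ j, star (α i) * E (M i j) * α j =
        ∑ k, E (star (∑ i, b k i * S.iotaM hbi (α i)) * ∑ j, b k j * S.iotaM hbi (α j)) := by
      have hk (k : Fin m) :
          E (star (∑ i, b k i * S.iotaM hbi (α i)) * ∑ j, b k j * S.iotaM hbi (α j)) =
          ∑ i, ∑ j, star (α i) * E (star (b k i) * b k j) * α j := by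
        simp_rw [star_sum, Finset.sum_mul, Finset.mul_sum, map_sum, star_mul, ← S.iotaM_star]
        refine Finset.sum_congr rfl fun i _ => Finset.sum_congr rfl fun j _ => ?_
        rw [← mul_assoc, hE.map_mul_iotaM h, mul_assoc, hE.map_iotaM_mul h]
      simp_rw [hk, hb, map_sum, Finset.mul_sum, Finset.sum_mul]
      rw [Finset.sum_comm (s := (Finset.univ : Finset (Fin m)))]
      exact Finset.sum_congr rfl fun i _ => Finset.sum_comm
    rw [hid]
    exact Finset.sum_nonneg fun k _ => hE.map_star_mul_self_nonneg h hbi _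

lemma tendsto_of_strict (hE : IsMultiplierExtension T p E) (h : IsUnitalModuleMap S T p)
    (hbi : S.Biaction) {l : Filter 𝓜(ℂ, A)} {m : 𝓜(ℂ, A)} (hl : ∀ᶠ x in l, ‖x‖ ≤ 1)
    (hm : ‖m‖ ≤ 1) (hlm : ∀ a : A, Tendsto (fun x : 𝓜(ℂ, A) => x.fst a) l (𝓝 (m.fst a))) :
    Tendsto (fun x => E x) l (𝓝 (E m)) := by
  have hne := h.unitFilter_neBot
  refine Metric.tendsto_nhds.2 fun ε hε => ?_
  have hδ : 0 < ε / 8 := by positivity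
  obtain ⟨u, hu⟩ := (hE.norm_sub_map_fst_le h hbi hδ).exists
  have hlim := Metric.tendsto_nhds.1 ((T.continuous.tendsto _).comp (hlm u)) (ε / 2) (half_pos hε)
  filter_upwards [hl, hlim] with x hx hxu
  have h1 := hu x
  have h2 := hu m
  rw [← dist_eq_norm] at h1 h2
  have h3 : dist (E x) (E m) ≤ dist (T (x.fst u)) (E x) + dist (T (x.fst u)) (T (m.fst u)) +
      dist (T (m.fst u)) (E m) := by
    rw [dist_comm (T (x.fst u)) (E x)]
    exact dist_triangle4 _ _ _ _
  have h4 : dist (T (x.fst u)) (T (m.fst u)) < ε / 2 := hxu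
  nlinarith

end IsMultiplierExtension

end IsUnitalModuleMap

end Extension

section Restriction

open CStarAction

variable {S : CStarAction 𝔄 A} {hbi : S.Biaction} {E : 𝓜(ℂ, A) → 𝔄}

lemma IsCPMap.exists_gram (hE : IsCPMap E) {n : ℕ} (b : Fin n → 𝓜(ℂ, A)) :
    ∃ (m : ℕ) (c : Fin m → Fin n → 𝔄), ∀ i j, E (star (b i) * b j) = ∑ k, star (c k i) * c k j :=
  hE n (fun i j => star (b i) * b j) ⟨1, fun _ => b, fun i j => by simp⟩

lemma sum_star_sub_mul_self {m : ℕ} (c d : Fin m → 𝔄) (α : 𝔄) :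
    ∑ k, star (d k - c k * α) * (d k - c k * α) =
      ∑ k, star (d k) * d k - (∑ k, star (d k) * c k) * α - star α * ∑ k, star (c k) * d k +
        star α * (∑ k, star (c k) * c k) * α := by
  simp only [Finset.mul_sum, Finset.sum_mul, ← Finset.sum_sub_distrib, ← Finset.sum_add_distrib]
  refine Finset.sum_congr rfl fun k _ => ?_
  simp only [star_sub, star_mul, sub_mul, mul_sub, mul_assoc]
  abel

variable [PartialOrder 𝔄] [StarOrderedRing 𝔄]

lemma IsCPMap.map_star_mul_self_nonneg (hE : IsCPMap E) (x : 𝓜(ℂ, A)) : 0 ≤ E (star x * x) := by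
  obtain ⟨m, c, hc⟩ := hE.exists_gram ![x]
  have := hc 0 0
  rw [Matrix.cons_val_zero] at this
  rw [this]
  exact Finset.sum_nonneg fun k _ => star_mul_self_nonneg _

lemma IsCPMap.map_one_nonneg (hE : IsCPMap E) : 0 ≤ E 1 := by
  simpa using hE.map_star_mul_self_nonneg 1

/-- A completely positive map on `M(A)` which restricts to the identity on `𝔄` sends `1` to a
unit of `𝔄`. -/
lemma IsCPMap.map_one_mul (hE : IsCPMap E) (hE1 : ‖E 1‖ ≤ 1)
    (hι : ∀ α, E (S.iotaM hbi α) = α) (α : 𝔄) : E 1 * α = α := by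
  set q := E 1 with hq
  have hq0 : 0 ≤ q := hE.map_one_nonneg
  have hle : star α * α ≤ star α * q * α := by
    obtain ⟨m, c, hc⟩ := hE.exists_gram ![1, S.iotaM hbi α]
    have h0 : 0 ≤ ∑ k, star (c k 1 - c k 0 * α) * (c k 1 - c k 0 * α) :=
      Finset.sum_nonneg fun k _ => star_mul_self_nonneg _
    rw [sum_star_sub_mul_self, ← hc, ← hc, ← hc, ← hc] at h0
    simpa [← iotaM_star, ← iotaM_mul, hι, ← hq] using h0
  have hqq : star α * (q * q) * α ≤ star α * q * α :=
    star_left_conjugate_le_conjugate (mul_self_le_self_of_norm_le_one hq0 hE1) α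
  rw [← sub_eq_zero, ← CStarRing.star_mul_self_eq_zero_iff]
  refine le_antisymm ?_ (star_mul_self_nonneg _)
  have hid : star (q * α - α) * (q * α - α) =
      (star α * (q * q) * α - star α * q * α) + (star α * α - star α * q * α) := by
    simp only [star_sub, star_mul, hq0.star_eq, sub_mul, mul_sub, mul_assoc]
    abel
  rw [hid]
  exact add_nonpos (sub_nonpos.2 hqq) (sub_nonpos.2 hle)

/-- Elements of `𝔄` lie in the multiplicative domain of a completely positive map which restricts
to the identity on `𝔄`. -/
lemma IsCPMap.map_mul_iotaM (hE : IsCPMap E) (hE1 : ‖E 1‖ ≤ 1)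
    (hι : ∀ α, E (S.iotaM hbi α) = α) (x : 𝓜(ℂ, A)) (α : 𝔄) :
    E (x * S.iotaM hbi α) = E x * α := by
  obtain ⟨m, c, hc⟩ := hE.exists_gram ![1, S.iotaM hbi α, star x]
  have h0 : ∑ k, star (c k 1 - c k 0 * α) * (c k 1 - c k 0 * α) = 0 := by
    rw [sum_star_sub_mul_self, ← hc, ← hc, ← hc, ← hc]
    simp [← iotaM_star, ← iotaM_mul, hι, mul_assoc, hE.map_one_mul hE1 hι]
  have hck (k : Fin m) : c k 1 = c k 0 * α :=
    sub_eq_zero.1 (eq_zero_of_sum_star_mul_self_eq_zero h0 k)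
  have h1 := hc 2 1
  have h2 := hc 2 0
  simp only [hck, ← mul_assoc, ← Finset.sum_mul, ← h2] at h1
  simpa using h1

lemma isRetraction_of_extension [PartialOrder A] [StarOrderedRing A] {τ : A → 𝔄}
    (hτ : ∀ a : A, E (a : 𝓜(ℂ, A)) = τ a) (hadd : ∀ x y, E (x + y) = E x + E y)
    (hsmul : ∀ (c : ℂ) x, E (c • x) = c • E x) (hE : IsCPMap E) (hnorm : ∀ x, ‖E x‖ ≤ ‖x‖)
    (hι : ∀ α, E (S.iotaM hbi α) = α)
    (hone : Tendsto τ (CStarAlgebra.approximateUnit A) (𝓝 (E 1))) : IsRetraction S τ := by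
  have hE1 : ‖E 1‖ ≤ 1 := by
    refine (hnorm 1).trans ?_
    rw [← DoubleCentralizer.norm_fst]
    exact ContinuousLinearMap.norm_id_le
  have hunit := hE.map_one_mul hE1 hι
  have hau := CStarAlgebra.increasingApproximateUnit A
  have hact (a : A) (α : 𝔄) : τ (S.act a α) = τ a * α := by
    rw [← hτ, ← hτ, S.coe_act hbi, hE.map_mul_iotaM hE1 hι]
  refine ⟨fun a b => ?_, fun c a => ?_, fun a => ?_, hact, fun β ε hε s => ?_, ?_⟩
  · rw [← hτ, ← hτ, ← hτ, ← hadd]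
    exact congr_arg E (map_add (DoubleCentralizer.coeHom (𝕜 := ℂ) (A := A)) a b)
  · rw [← hτ, ← hτ, ← hsmul]
    exact congr_arg E (map_smul (DoubleCentralizer.coeHom (𝕜 := ℂ) (A := A)) c a)
  · rw [isPosElem_iff_nonneg, ← hτ, DoubleCentralizer.coe_mul, DoubleCentralizer.coe_star]
    exact hE.map_star_mul_self_nonneg _
  · have hlim (α : 𝔄) : Tendsto (fun u => τ (S.act (S.act u β) α))
        (CStarAlgebra.approximateUnit A) (𝓝 (β * α)) := by
      have := (hone.mul_const β).mul_const α
      rw [hunit] at this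
      simpa only [hact] using this
    have hev : ∀ᶠ u in CStarAlgebra.approximateUnit A,
        ∀ α ∈ s, ‖τ (S.act (S.act u β) α) - β * α‖ < ε := by
      rw [Filter.eventually_all_finset]
      intro α _
      simpa only [dist_eq_norm] using Metric.tendsto_nhds.1 (hlim α) ε hε
    obtain ⟨u, hu⟩ := hev.exists
    exact ⟨S.act u β, hu⟩
  · exact ⟨_, E 1, hau.neBot, ⟨1, hau.eventually_norm⟩, hau.tendsto_mul_right,
      hau.tendsto_mul_left, hE.map_one_nonneg.star_eq, hunit _,
      fun α => hone.mul_const α, fun α => hone.const_mul α⟩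

end Restriction

/-- If the action of `𝔄` on `A` is non degenerate, then the `𝔄`-retractions
are exactly those linear maps `τ : A → 𝔄` which extend to an idempotent contractive completely
positive map `τ̃ : M(A) → 𝔄` that is strictly continuous on the unit ball of `M(A)`. -/
theorem retraction_iff_idempotent_ccp_extension
    (S : CStarAction 𝔄 A) (hnd : S.NonDegenerate) (hbi : S.Biaction) (τ : A → 𝔄) :
    IsRetraction S τ ↔
      ∃ τ' : 𝓜(ℂ, A) → 𝔄,
        (∀ a : A, τ' (a : 𝓜(ℂ, A)) = τ a) ∧
        (∀ x y : 𝓜(ℂ, A), τ' (x + y) = τ' x + τ' y) ∧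
        (∀ (c : ℂ) (x : 𝓜(ℂ, A)), τ' (c • x) = c • τ' x) ∧
        IsCPMap τ' ∧
        (∀ x : 𝓜(ℂ, A), ‖τ' x‖ ≤ ‖x‖) ∧
        (∀ α : 𝔄, τ' (S.iotaM hbi α) = α) ∧
        (∀ (l : Filter 𝓜(ℂ, A)), l.NeBot → ∀ m : 𝓜(ℂ, A),
          (∀ᶠ x in l, ‖x‖ ≤ 1) → ‖m‖ ≤ 1 →
          (∀ a : A,
            Filter.Tendsto (fun x => x * (a : 𝓜(ℂ, A))) l (𝓝 (m * (a : 𝓜(ℂ, A)))) ∧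
            Filter.Tendsto (fun x => (a : 𝓜(ℂ, A)) * x) l (𝓝 ((a : 𝓜(ℂ, A)) * m))) →
          Filter.Tendsto (fun x => τ' x) l (𝓝 (τ' m))) := by
  let _ := CStarAlgebra.spectralOrder 𝔄
  have := CStarAlgebra.spectralOrderedRing 𝔄
  let _ := CStarAlgebra.spectralOrder A
  have := CStarAlgebra.spectralOrderedRing A
  constructor
  · intro h
    obtain ⟨T, rfl⟩ := h.exists_continuousLinearMap
    obtain ⟨p, hT⟩ := h.exists_isUnitalModuleMap
    obtain ⟨E, hE⟩ := hT.exists_isMultiplierExtension hbi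
    refine ⟨E, hE.map_coe hT hbi, map_add E, map_smul E, hE.isCPMap hT hbi,
      hE.norm_map_le hT hbi, hE.map_iotaM hT hbi, fun l _ m hl hm hlm => ?_⟩
    refine hE.tendsto_of_strict hT hbi hl hm fun a => ?_
    have := (hlm a).1
    simp only [DoubleCentralizer.mul_coe_eq] at this
    exact DoubleCentralizer.tendsto_coe_iff.1 this
  · rintro ⟨E, hτ, hadd, hsmul, hcp, hnorm, hι, hcont⟩
    refine isRetraction_of_extension hτ hadd hsmul hcp hnorm hι ?_
    have hau := CStarAlgebra.increasingApproximateUnit A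
    have hlim := hcont (map (fun u : A => (u : 𝓜(ℂ, A))) (CStarAlgebra.approximateUnit A))
      inferInstance 1 ?_ ?_ fun a => ⟨?_, ?_⟩
    · exact (tendsto_map'_iff.1 hlim).congr hτ
    · rw [eventually_map]
      simpa only [DoubleCentralizer.norm_coe_eq] using hau.eventually_norm
    · rw [← DoubleCentralizer.norm_fst]
      exact ContinuousLinearMap.norm_id_le
    · rw [tendsto_map'_iff, one_mul]
      have := DoubleCentralizer.tendsto_coe_iff.2 (hau.tendsto_mul_right a)
      simpa only [DoubleCentralizer.coe_mul, Function.comp_def] using this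
    · rw [tendsto_map'_iff, mul_one]
      have := DoubleCentralizer.tendsto_coe_iff.2 (hau.tendsto_mul_left a)
      simpa only [DoubleCentralizer.coe_mul, Function.comp_def] using this
end
end
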